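/- Every set P of n points in the plane in general orthogonal position (no two points share an x- or y-coordinate) that forms a 'diagonal' point set — i.e., when sorted by increasing x-coordinate, the y-coordinates are strictly decreasing — admits a planar L-shaped drawing of any tree with n nodes and maximum degree 4, where each vertex is placed on a distinct point and each edge is an axis-parallel path with exactly one bend, and no two edges cross. -/

import Mathlib

/-- The L-shaped (one-bend orthogonal) path from `p` to `q`: a horizontal and a vertical
segment meeting at the bend, which is `(p.1, q.2)` if `b` and `(q.1, p.2)` otherwise. -/
def Lpath (p q : ℝ × ℝ) (b : Bool) : Set (ℝ × ℝ) :=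
  segment ℝ p (if b then (p.1, q.2) else (q.1, p.2)) ∪
    segment ℝ (if b then (p.1, q.2) else (q.1, p.2)) q

/-- A two-page book embedding of the subgraph of `G` induced on `S`, with spine positions `f` and
page assignment `c`, in which every vertex has at most one edge to each side on each page. -/
structure IsPortLayoutOn {V : Type*} (G : SimpleGraph V) (S : Set V) (f : V → ℝ)
    (c : V → V → Bool) : Prop where
  inj : Set.InjOn f S
  symm : ∀ u v, c u v = c v u
  port : ∀ u ∈ S, ∀ v ∈ S, ∀ w ∈ S, G.Adj u v → G.Adj u w → v ≠ w → c u v = c u w →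
    (f v < f u ↔ ¬ f w < f u)
  noncrossing : ∀ u ∈ S, ∀ v ∈ S, ∀ x ∈ S, ∀ y ∈ S, G.Adj u v → G.Adj x y → c u v = c x y →
    f u < f x → f x < f v → ¬ f v < f y

lemma Finset.exists_adjacent_lt {V : Type*} (S : Finset V) (f : V → ℝ) (a : ℝ) :
    ∃ t, t < a ∧ ∀ x ∈ S, (f x < a → f x < t) ∧ (a ≤ f x → t < f x) := by
  obtain ⟨t, ht, hS⟩ : ∃ t, t < a ∧ ∀ x ∈ S, f x < a → f x < t := by
    classical
    induction S using Finset.induction_on with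
    | empty => exact ⟨a - 1, by linarith, by simp⟩
    | insert y S _ ih =>
      obtain ⟨t, ht, hS⟩ := ih
      by_cases hy : f y < a
      · obtain ⟨s, hs, hs'⟩ := _root_.exists_between (max_lt ht hy)
        obtain ⟨hts, hys⟩ := max_lt_iff.1 hs
        refine ⟨s, hs', fun x hx hxa => ?_⟩
        rcases Finset.mem_insert.1 hx with rfl | hx
        · exact hys
        · exact (hS x hx hxa).trans hts
      · refine ⟨t, ht, fun x hx hxa => ?_⟩
        rcases Finset.mem_insert.1 hx with rfl | hx
        · exact absurd hxa hy
        · exact hS x hx hxa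
  exact ⟨t, ht, fun x hx => ⟨hS x hx, ht.trans_le⟩⟩

lemma Finset.exists_adjacent_gt {V : Type*} (S : Finset V) (f : V → ℝ) (a : ℝ) :
    ∃ t, a < t ∧ ∀ x ∈ S, (a < f x → t < f x) ∧ (f x ≤ a → f x < t) := by
  obtain ⟨t, ht, hS⟩ := S.exists_adjacent_lt (fun x => - f x) (-a)
  refine ⟨-t, by linarith, fun x hx => ⟨fun h => ?_, fun h => ?_⟩⟩
  · linarith [(hS x hx).1 (by linarith)]
  · linarith [(hS x hx).2 (by linarith)]

/-- A new position directly before (if `s`) or directly after (otherwise) `u`. -/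
lemma Finset.exists_adjacent_position {V : Type*} (S : Finset V) {f : V → ℝ}
    (hf : Set.InjOn f S) {u : V} (hu : u ∈ S) (s : Bool) :
    ∃ t, (t < f u ↔ s = true) ∧ (f u < t ↔ s = false) ∧
      ∀ x ∈ S, x ≠ u → (f x < t ↔ f x < f u) ∧ (t < f x ↔ f u < f x) := by
  cases s
  · obtain ⟨t, ht, hS⟩ := S.exists_adjacent_gt f (f u)
    refine ⟨t, by simp [ht.le], by simp [ht], fun x hx hxu => ?_⟩
    have hne : f x ≠ f u := fun h => hxu (hf hx hu h)
    have := hS x hx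
    grind
  · obtain ⟨t, ht, hS⟩ := S.exists_adjacent_lt f (f u)
    refine ⟨t, by simp [ht], by simp [ht.le], fun x hx hxu => ?_⟩
    have hne : f x ≠ f u := fun h => hxu (hf hx hu h)
    have := hS x hx
    grind

/-- A vertex with at most three neighbours in `S` has a free port. -/
lemma SimpleGraph.exists_free_port {V : Type*} [Fintype V] [DecidableEq V] {G : SimpleGraph V}
    [DecidableRel G.Adj] {S : Finset V} (f : V → ℝ) (c : V → V → Bool) {u v : V} (hv : v ∉ S)
    (huv : G.Adj u v) (hdeg : G.degree u ≤ 4) :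
    ∃ b s : Bool, ∀ w ∈ S, G.Adj u w → c u w = b → (f w < f u ↔ s = false) := by
  let N := (G.neighborFinset u).filter (· ∈ S)
  have hN : N.card < 4 := by
    refine lt_of_lt_of_le (Finset.card_lt_card (Finset.filter_ssubset.2 ⟨v, ?_, hv⟩)) hdeg
    simpa using huv
  let g : V → Bool × Bool := fun w => (c u w, decide (f w < f u))
  obtain ⟨⟨b, s⟩, -, hbs⟩ : ∃ p ∈ (Finset.univ : Finset (Bool × Bool)), p ∉ N.image g := by
    refine Finset.exists_mem_notMem_of_card_lt_card (lt_of_le_of_lt Finset.card_image_le ?_)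
    simpa using hN
  refine ⟨b, s, fun w hw huw hc => ?_⟩
  have hne : g w ≠ (b, s) := fun hg => hbs (Finset.mem_image.2 ⟨w, by simp [N, hw, huw], hg⟩)
  cases s <;> simpa [g, hc] using hne

/-- A leaf can be inserted next to its neighbour. -/
lemma IsPortLayoutOn.exists_insert {V : Type*} [Fintype V] [DecidableEq V] {G : SimpleGraph V}
    [DecidableRel G.Adj] {S : Finset V} {f : V → ℝ} {c : V → V → Bool}
    (h : IsPortLayoutOn G S f c) {u v : V} (hu : u ∈ S) (hv : v ∉ S) (huv : G.Adj u v)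
    (huniq : ∀ w ∈ S, G.Adj v w → w = u) (hdeg : G.degree u ≤ 4) :
    ∃ f' c', IsPortLayoutOn G (insert v S : Finset V) f' c' := by
  obtain ⟨b, s, hbs⟩ := SimpleGraph.exists_free_port f c hv huv hdeg
  obtain ⟨t, hlt, hgt, ht⟩ := S.exists_adjacent_position h.inj hu s
  have hfv : ∀ x ∈ S, Function.update f v t x = f x := fun x hx =>
    Function.update_of_ne (by rintro rfl; exact hv hx) _ _
  have hvv : Function.update f v t v = t := Function.update_self ..
  have htu : t ≠ f u := by cases s <;> grind
  have htx : ∀ x ∈ S, t ≠ f x := by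
    intro x hx hxt
    by_cases hxu : x = u
    · exact htu (hxu ▸ hxt)
    · have := ht x hx hxu
      have : f x ≠ f u := fun e => hxu (h.inj hx hu e)
      grind
  have hvw : ∀ w, w = v ∨ w ∈ S → G.Adj v w → w = u := by
    rintro w (rfl | hw) hw'
    · exact absurd hw' (G.loopless.irrefl _)
    · exact huniq w hw hw'
  have hwv : ∀ w, w = v ∨ w ∈ S → G.Adj w v → w = u := fun w hw hw' => hvw w hw hw'.symm
  generalize hF : Function.update f v t = F at hfv hvv
  have hne : u ≠ v := huv.ne
  refine ⟨F, fun x y => if x = v ∨ y = v then b else c x y, ?_, ?_, ?_, ?_⟩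
  · intro x hx y hy hxy
    have hinj := @h.inj x
    simp only [Finset.coe_insert, Set.mem_insert_iff, Finset.mem_coe] at hx hy hinj
    grind
  · intro x y
    simp only [or_comm, h.symm x y]
  · intro x hx y hy z hz hxy hxz hyz hc
    simp only [Finset.coe_insert, Set.mem_insert_iff, Finset.mem_coe] at hx hy hz
    have hport := h.port x
    have hbs' : ∀ w ∈ S, G.Adj u w → c u w = b → (F w < F u ↔ s = false) := by
      intro w hw
      rw [hfv w hw, hfv u hu]
      exact hbs w hw
    have hltF : F v < F u ↔ s = true := by rw [hvv, hfv u hu]; exact hlt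
    clear hbs hlt hgt ht htx
    have hxv : x ≠ v := by rintro rfl; exact hyz ((hvw y hy hxy).trans (hvw z hz hxz).symm)
    have hxS := hx.resolve_left hxv
    rcases eq_or_ne y v with rfl | hyv
    · obtain rfl := hwv x hx hxy
      have := hbs' z (hz.resolve_left hyz.symm) hxz (by simpa [hne, hyz.symm] using hc.symm)
      rw [hltF, this]
      cases s <;> simp
    · rcases eq_or_ne z v with rfl | hzv
      · obtain rfl := hwv x hx hxz
        have := hbs' y (hy.resolve_left hyz) hxy (by simpa [hne, hyz] using hc)
        rw [hltF, this]
        cases s <;> simp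
      · have hyS := hy.resolve_left hyv
        have hzS := hz.resolve_left hzv
        rw [hfv x hxS, hfv y hyS, hfv z hzS]
        exact hport hxS y hyS z hzS hxy hxz hyz (by simpa [hxv, hyv, hzv] using hc)
  · intro x hx y hy z hz w hw hxy hzw hc h1 h2 h3
    simp only [Finset.coe_insert, Set.mem_insert_iff, Finset.mem_coe] at hx hy hz hw
    have hbetween : ∀ r, r = v ∨ r ∈ S →
        ¬ (F v < F r ∧ F r < F u) ∧ ¬ (F u < F r ∧ F r < F v) := by
      intro r hr
      by_cases hrv : r = v
      · subst hrv; simp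
      · have hrS := hr.resolve_left hrv
        by_cases hru : r = u
        · subst hru; simp
        · have := ht r hrS hru
          rw [hvv, hfv r hrS, hfv u hu]
          constructor <;> rintro ⟨h1, h2⟩ <;> grind
    have hxv : x ≠ v := by
      rintro rfl; obtain rfl := hvw y hy hxy; exact (hbetween z hz).1 ⟨h1, h2⟩
    have hyv : y ≠ v := by
      rintro rfl; obtain rfl := hwv x hx hxy; exact (hbetween z hz).2 ⟨h1, h2⟩
    have hzv : z ≠ v := by
      rintro rfl; obtain rfl := hvw w hw hzw; exact (hbetween y hy).1 ⟨h2, h3⟩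
    have hwv' : w ≠ v := by
      rintro rfl; obtain rfl := hwv z hz hzw; exact (hbetween y hy).2 ⟨h2, h3⟩
    have hxS := hx.resolve_left hxv
    have hyS := hy.resolve_left hyv
    have hzS := hz.resolve_left hzv
    have hwS := hw.resolve_left hwv'
    rw [hfv x hxS, hfv z hzS] at h1
    rw [hfv z hzS, hfv y hyS] at h2
    rw [hfv y hyS, hfv w hwS] at h3
    exact h.noncrossing x hxS y hyS z hzS w hwS hxy hzw (by simpa [hxv, hyv, hzv, hwv'] using hc)
      h1 h2 h3

lemma SimpleGraph.IsTree.exists_isPortLayoutOn {V : Type*} [Fintype V] [DecidableEq V]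
    {G : SimpleGraph V} [DecidableRel G.Adj] (hT : G.IsTree) (hdeg : ∀ v, G.degree v ≤ 4) :
    ∃ f c, IsPortLayoutOn G Set.univ f c := by
  suffices H : ∀ k, 1 ≤ k → k ≤ Fintype.card V → ∃ S : Finset V, S.card = k ∧
      (G.induce (S : Set V)).Preconnected ∧ ∃ f c, IsPortLayoutOn G S f c by
    have := hT.connected.nonempty
    obtain ⟨S, hS, -, f, c, h⟩ := H _ Fintype.card_pos le_rfl
    rw [Finset.card_eq_iff_eq_univ] at hS
    subst hS
    exact ⟨f, c, by simpa using h⟩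
  intro k hk
  induction k, hk using Nat.le_induction with
  | base =>
    intro _
    obtain ⟨r⟩ := hT.connected.nonempty
    refine ⟨{r}, by simp, ?_, fun _ => 0, fun _ _ => true, ?_, ?_, ?_, ?_⟩
    · rintro ⟨a, ha⟩ ⟨b, hb⟩
      obtain rfl : a = r := by simpa using ha
      obtain rfl : b = a := by simpa using hb
      exact SimpleGraph.Reachable.refl _
    all_goals simp
  | succ k hk ih =>
    intro hcard
    obtain ⟨S, hS, hconn, f, c, h⟩ := ih (by omega)
    obtain ⟨a, ha⟩ : S.Nonempty := Finset.card_pos.1 (by omega)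
    obtain ⟨z, hz⟩ : ∃ z, z ∉ S := by
      by_contra! hall
      have := Finset.card_eq_iff_eq_univ S |>.2 (by ext; simp [hall])
      omega
    obtain ⟨u, v, huv, hu, hv⟩ : ∃ u v, G.Adj u v ∧ u ∈ S ∧ v ∉ S := by
      obtain ⟨p⟩ := hT.connected.preconnected a z
      obtain ⟨d, -, hd, hd'⟩ := p.exists_boundary_dart (S : Set V) ha hz
      exact ⟨d.fst, d.snd, d.adj, hd, hd'⟩
    have huniq : ∀ w ∈ S, G.Adj v w → w = u := by
      intro w hw hvw
      by_contra hne
      have hbr := SimpleGraph.isAcyclic_iff_forall_adj_isBridge.1 hT.isAcyclic huv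
      rw [SimpleGraph.isBridge_iff] at hbr
      refine hbr ?_
      let F : G.induce (S : Set V) →g G.deleteEdges {s(u, v)} :=
        ⟨Subtype.val, by
          rintro ⟨x, hx⟩ ⟨y, hy⟩ hxy
          have hxv : x ≠ v := by rintro rfl; exact hv hx
          have hyv : y ≠ v := by rintro rfl; exact hv hy
          have hxy' : G.Adj x y := hxy
          simp [hxy', hxv, hyv]⟩
      have h1 := (hconn ⟨u, hu⟩ ⟨w, hw⟩).map F
      refine h1.trans (SimpleGraph.Adj.reachable ?_)
      simp only [SimpleGraph.deleteEdges_adj]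
      refine ⟨hvw.symm, ?_⟩
      have hwv : w ≠ v := hvw.ne'
      simp [F, hne, hwv]
    refine ⟨insert v S, by rw [Finset.card_insert_of_notMem hv, hS], ?_,
      h.exists_insert hu hv huv huniq (hdeg u)⟩
    have hreach : ∀ x : ↥((insert v S : Finset V) : Set V),
        (G.induce ((insert v S : Finset V) : Set V)).Reachable x ⟨u, by simp [hu]⟩ := by
      rintro ⟨x, hx⟩
      rcases Finset.mem_insert.1 (Finset.mem_coe.1 hx) with rfl | hxS
      · exact SimpleGraph.Adj.reachable huv.symm
      · exact (hconn ⟨x, hxS⟩ ⟨u, hu⟩).map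
          (SimpleGraph.induceHomOfLE G (Finset.coe_subset.2 (Finset.subset_insert v S))).toHom
    exact fun x y => (hreach x).trans (hreach y).symm

lemma Lpath_comm (p q : ℝ × ℝ) (b : Bool) : Lpath p q b = Lpath q p (!b) := by
  cases b <;> simp [Lpath, segment_symm ℝ q, segment_symm ℝ _ p, Set.union_comm]

lemma mem_Lpath_false {p q z : ℝ × ℝ} (h1 : p.1 < q.1) (h2 : q.2 < p.2) :
    z ∈ Lpath p q false ↔ (z.2 = p.2 ∧ p.1 ≤ z.1 ∧ z.1 ≤ q.1) ∨
      (z.1 = q.1 ∧ q.2 ≤ z.2 ∧ z.2 ≤ p.2) := by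
  obtain ⟨a, b⟩ := p
  obtain ⟨c, d⟩ := q
  obtain ⟨x, y⟩ := z
  dsimp only at h1 h2
  simp only [Lpath, Bool.false_eq_true, if_false, Set.mem_union, ← Prod.image_mk_segment_left,
    ← Prod.image_mk_segment_right, segment_eq_uIcc, Set.uIcc_of_le h1.le, Set.uIcc_of_ge h2.le,
    Set.mem_image, Set.mem_Icc, Prod.mk.injEq]
  grind

lemma mem_Lpath_true {p q z : ℝ × ℝ} (h1 : p.1 < q.1) (h2 : q.2 < p.2) :
    z ∈ Lpath p q true ↔ (z.1 = p.1 ∧ q.2 ≤ z.2 ∧ z.2 ≤ p.2) ∨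
      (z.2 = q.2 ∧ p.1 ≤ z.1 ∧ z.1 ≤ q.1) := by
  obtain ⟨a, b⟩ := p
  obtain ⟨c, d⟩ := q
  obtain ⟨x, y⟩ := z
  dsimp only at h1 h2
  simp only [Lpath, if_true, Set.mem_union, ← Prod.image_mk_segment_left,
    ← Prod.image_mk_segment_right, segment_eq_uIcc, Set.uIcc_of_le h1.le, Set.uIcc_of_ge h2.le,
    Set.mem_image, Set.mem_Icc, Prod.mk.injEq]
  grind

/-- A port layout depends only on the order of the positions. -/
lemma IsPortLayoutOn.congr_order {V : Type*} {G : SimpleGraph V} {S : Set V} {f g : V → ℝ}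
    {c : V → V → Bool} (h : IsPortLayoutOn G S f c) (hfg : ∀ u v, g u < g v ↔ f u < f v) :
    IsPortLayoutOn G S g c := by
  refine ⟨fun u hu v hv huv => h.inj hu hv ?_, h.symm, ?_, ?_⟩
  · have h1 := hfg u v
    have h2 := hfg v u
    rw [huv] at h1 h2
    exact le_antisymm (not_lt.1 fun e => lt_irrefl _ (h2.2 e))
      (not_lt.1 fun e => lt_irrefl _ (h1.2 e))
  · simpa only [hfg] using h.port
  · simpa only [hfg] using h.noncrossing

/-- A finite set of points with distinct abscissae can be parametrized in any prescribed order. -/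
lemma Finset.exists_bijOn_fst_lt_iff {V : Type*} [Fintype V] (P : Finset (ℝ × ℝ))
    (hP : Set.InjOn Prod.fst (P : Set (ℝ × ℝ))) (hcard : P.card = Fintype.card V) {f : V → ℝ}
    (hf : Function.Injective f) :
    ∃ φ : V → ℝ × ℝ, Set.BijOn φ Set.univ P ∧ ∀ u v, (φ u).1 < (φ v).1 ↔ f u < f v := by
  classical
  let e₁ := (P.image Prod.fst).orderIsoOfFin ((Finset.card_image_of_injOn hP).trans hcard)
  let e₂ := (Finset.univ.image f).orderIsoOfFin ((Finset.card_image_of_injective _ hf).trans rfl : _ = Fintype.card V)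
  let g : V → P.image Prod.fst := fun v => e₁ (e₂.symm ⟨f v, by simp⟩)
  have hg : ∀ u v, (g u : ℝ) < g v ↔ f u < f v := by
    intro u v
    change (e₁ _ : ℝ) < e₁ _ ↔ _
    rw [Subtype.coe_lt_coe, e₁.lt_iff_lt, e₂.symm.lt_iff_lt, Subtype.mk_lt_mk]
  choose φ hφP hφ using fun v => Finset.mem_image.1 (g v).2
  have hlt : ∀ u v, (φ u).1 < (φ v).1 ↔ f u < f v := by
    intro u v
    rw [hφ, hφ, hg]
  have hinj : Function.Injective φ := by
    intro u v huv
    refine hf (le_antisymm (not_lt.1 fun e => ?_) (not_lt.1 fun e => ?_)) <;>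
    · rw [← hlt, huv] at e
      exact lt_irrefl _ e
  refine ⟨φ, ⟨fun v _ => hφP v, hinj.injOn, ?_⟩, hlt⟩
  have := Finset.surj_on_of_inj_on_of_card_le (s := Finset.univ) (t := P) (fun v _ => φ v)
    (fun v _ => hφP v) (fun u v _ _ h => hinj h) (by simp [hcard])
  intro p hp
  obtain ⟨v, -, hv⟩ := this p hp
  exact ⟨v, Set.mem_univ _, hv.symm⟩

lemma IsPortLayoutOn.Lpath_inter_subset {V : Type*} {G : SimpleGraph V} {φ : V → ℝ × ℝ}
    {c : V → V → Bool} (h : IsPortLayoutOn G Set.univ (fun v => (φ v).1) c)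
    (hφ : ∀ u v, (φ u).1 < (φ v).1 ↔ (φ v).2 < (φ u).2) {u v x y : V} (huv : G.Adj u v)
    (hxy : G.Adj x y) (hne : ({u, v} : Set V) ≠ {x, y}) (hu : (φ u).1 < (φ v).1)
    (hx : (φ x).1 < (φ y).1) :
    Lpath (φ u) (φ v) (c u v) ∩ Lpath (φ x) (φ y) (c x y) ⊆
      φ '' (({u, v} : Set V) ∩ {x, y}) := by
  have hinj : ∀ a b, (φ a).1 = (φ b).1 → a = b := fun a b e => Set.injOn_univ.1 h.inj e
  have hφ' : ∀ a b, (φ a).1 ≤ (φ b).1 ↔ (φ b).2 ≤ (φ a).2 := fun a b => by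
    rw [← not_lt, hφ, not_lt]
  have hinj' : ∀ a b, (φ a).2 = (φ b).2 → a = b := fun a b e =>
    hinj a b (le_antisymm ((hφ' a b).2 e.ge) ((hφ' b a).2 e.le))
  have hsrc : c u v = c x y → u ≠ x := by
    rintro hc rfl
    have := h.port u trivial v trivial y trivial huv hxy (by rintro rfl; exact hne rfl) hc
    simp [hu.not_gt, hx.not_gt] at this
  have htgt : c u v = c x y → v ≠ y := by
    rintro hc rfl
    have := h.port v trivial u trivial x trivial huv.symm hxy.symm (by rintro rfl; exact hne rfl)
      (by rw [h.symm v u, h.symm v x, hc])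
    simp [hu, hx] at this
  have hcross := h.noncrossing u trivial v trivial x trivial y trivial huv hxy
  have hcross' := h.noncrossing x trivial y trivial u trivial v trivial hxy huv
  have hu' := (hφ u v).1 hu
  have hx' := (hφ x y).1 hx
  rintro z ⟨hz1, hz2⟩
  suffices ∃ a, (a = u ∨ a = v) ∧ (a = x ∨ a = y) ∧ (φ a).1 = z.1 ∧ (φ a).2 = z.2 by
    obtain ⟨a, ha, ha', e1, e2⟩ := this
    exact ⟨a, ⟨ha, ha'⟩, Prod.ext e1 e2⟩
  have hmeet : ∀ a b, (φ a).1 = z.1 → (φ b).2 = z.2 → a = b →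
      (φ a).1 = z.1 ∧ (φ a).2 = z.2 := by
    rintro a b h1 h2 rfl
    exact ⟨h1, h2⟩
  have hlt : ∀ a b, a ≠ b → (φ a).1 ≤ (φ b).1 → (φ a).1 < (φ b).1 := fun a b hab hle =>
    lt_of_le_of_ne hle fun e => hab (hinj a b e)
  have heq : ∀ a b, (φ a).1 ≤ (φ b).1 → (φ a).2 ≤ (φ b).2 → a = b := fun a b h1 h2 =>
    hinj a b (le_antisymm h1 ((hφ' b a).2 h2))
  -- In each case the common point has the abscissa of one endpoint and the ordinate of another,
  -- and the layout forces these endpoints to agree.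
  cases hc1 : c u v <;> cases hc2 : c x y <;>
    simp only [hc1, hc2, mem_Lpath_false hu hu', mem_Lpath_false hx hx', mem_Lpath_true hu hu',
      mem_Lpath_true hx hx', forall_const, reduceCtorEq, false_imp_iff]
      at hz1 hz2 hsrc htgt hcross hcross' <;>
    rcases hz1 with ⟨e1, l1, r1⟩ | ⟨e1, l1, r1⟩ <;>
    rcases hz2 with ⟨e2, l2, r2⟩ | ⟨e2, l2, r2⟩ <;>
    try rw [e1] at l2 r2 <;> rw [e2] at l1 r1
  · exact absurd (hinj' u x (e1.symm.trans e2)) hsrc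
  · by_cases huy : u = y
    · exact ⟨y, Or.inl huy.symm, Or.inr rfl, hmeet y u e2.symm e1.symm huy.symm⟩
    · exact absurd (hlt y v htgt.symm r1)
        (hcross' (hlt x u hsrc.symm ((hφ' x u).2 r2)) (hlt u y huy l1))
  · by_cases hvx : v = x
    · exact ⟨v, Or.inr rfl, Or.inl hvx, hmeet v x e1.symm e2.symm hvx⟩
    · exact absurd (hlt v y htgt r2)
        (hcross (hlt u x hsrc ((hφ' u x).2 r1)) (hlt x v (Ne.symm hvx) l2))
  · exact absurd (hinj v y (e1.symm.trans e2)) htgt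
  · have := heq u x l1 r2
    exact ⟨x, Or.inl this.symm, Or.inl rfl, hmeet x u e2.symm e1.symm this.symm⟩
  · have := hinj' u y (e1.symm.trans e2)
    exact ⟨u, Or.inl rfl, Or.inr this, le_antisymm l1 (r2.trans_eq (by rw [this])), e1.symm⟩
  · have := hinj v x (e1.symm.trans e2)
    exact ⟨v, Or.inr rfl, Or.inl this, e1.symm, le_antisymm l1 (r2.trans_eq (by rw [this]))⟩
  · have := heq v y r2 l1
    exact ⟨v, Or.inr rfl, Or.inr this, hmeet v y e1.symm e2.symm this⟩
  · have := heq x u l2 r1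
    exact ⟨u, Or.inl rfl, Or.inl this.symm, hmeet u x e1.symm e2.symm this.symm⟩
  · have := hinj u y (e1.symm.trans e2)
    exact ⟨y, Or.inl this.symm, Or.inr rfl, e2.symm, le_antisymm l2 (r1.trans_eq (by rw [this]))⟩
  · have := hinj' v x (e1.symm.trans e2)
    exact ⟨x, Or.inr this.symm, Or.inl rfl, le_antisymm l2 (r1.trans_eq (by rw [this])), e2.symm⟩
  · have := heq y v r1 l2
    exact ⟨y, Or.inr this, Or.inr rfl, hmeet y v e2.symm e1.symm this⟩
  · exact absurd (hinj u x (e1.symm.trans e2)) hsrc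
  · by_cases huy : u = y
    · exact ⟨u, Or.inl rfl, Or.inr huy, hmeet u y e1.symm e2.symm huy⟩
    · exact absurd (hlt y v htgt.symm ((hφ' y v).2 l1))
        (hcross' (hlt x u hsrc.symm l2) (hlt u y huy r2))
  · by_cases hvx : v = x
    · exact ⟨x, Or.inr hvx.symm, Or.inl rfl, hmeet x v e2.symm e1.symm hvx.symm⟩
    · exact absurd (hlt v y htgt ((hφ' v y).2 l2))
        (hcross (hlt u x hsrc l1) (hlt x v (Ne.symm hvx) r1))
  · exact absurd (hinj' v y (e1.symm.trans e2)) htgt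

/-- Every diagonal point set (no two points share an x- or y-coordinate, and sorting by
increasing x gives strictly decreasing y) of size `n` admits a planar L-shaped drawing of
any tree with `n` nodes and maximum degree 4: vertices go bijectively to the points, each
edge is drawn as an L-shaped path (consistently for both orientations of the edge), and
two distinct edges intersect only in the images of their common endpoints. -/
theorem stmt13 (n : ℕ) (P : Finset (ℝ × ℝ)) (hcard : P.card = n)
    (hgen : ∀ p ∈ P, ∀ q ∈ P, p ≠ q → p.1 ≠ q.1 ∧ p.2 ≠ q.2)
    (hdiag : ∀ p ∈ P, ∀ q ∈ P, p.1 < q.1 → q.2 < p.2)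
    (G : SimpleGraph (Fin n)) [DecidableRel G.Adj]
    (hT : G.IsTree) (hdeg : ∀ v : Fin n, G.degree v ≤ 4) :
    ∃ (φ : Fin n → ℝ × ℝ) (bend : Fin n → Fin n → Bool),
      Set.BijOn φ Set.univ ↑P ∧
      (∀ u v : Fin n, G.Adj u v →
        Lpath (φ u) (φ v) (bend u v) = Lpath (φ v) (φ u) (bend v u)) ∧
      (∀ u v x y : Fin n, G.Adj u v → G.Adj x y →
        ({u, v} : Set (Fin n)) ≠ ({x, y} : Set (Fin n)) →
        Lpath (φ u) (φ v) (bend u v) ∩ Lpath (φ x) (φ y) (bend x y) ⊆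
          φ '' (({u, v} : Set (Fin n)) ∩ ({x, y} : Set (Fin n)))) := by
  have hP : Set.InjOn Prod.fst (P : Set (ℝ × ℝ)) := fun p hp q hq h =>
    by_contra fun hne => (hgen p hp q hq hne).1 h
  obtain ⟨f, c, h⟩ := hT.exists_isPortLayoutOn hdeg
  obtain ⟨φ, hbij, hlt⟩ :=
    P.exists_bijOn_fst_lt_iff hP (by simpa using hcard) (Set.injOn_univ.1 h.inj)
  have h' := h.congr_order hlt
  have hφP : ∀ v, φ v ∈ P := fun v => hbij.mapsTo (Set.mem_univ v)
  have hφ : ∀ u v, (φ u).1 < (φ v).1 ↔ (φ v).2 < (φ u).2 := by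
    intro u v
    refine ⟨hdiag _ (hφP u) _ (hφP v), fun hlt => ?_⟩
    by_contra! hle
    rcases hle.lt_or_eq with hlt' | heq
    · exact lt_asymm hlt (hdiag _ (hφP v) _ (hφP u) hlt')
    · rw [hP (hφP v) (hφP u) heq] at hlt
      exact lt_irrefl _ hlt
  have hcmp : ∀ u v, G.Adj u v → (φ u).1 < (φ v).1 ∨ (φ v).1 < (φ u).1 := fun u v huv =>
    lt_or_gt_of_ne fun e => huv.ne (Set.injOn_univ.1 h'.inj e)
  let bend : Fin n → Fin n → Bool := fun u v => if (φ u).1 < (φ v).1 then c u v else !c u v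
  have hsymm : ∀ u v, G.Adj u v →
      Lpath (φ u) (φ v) (bend u v) = Lpath (φ v) (φ u) (bend v u) := by
    intro u v huv
    rw [Lpath_comm]
    congr 1
    rcases hcmp u v huv with hlt | hlt <;> simp [bend, hlt, hlt.not_gt, h.symm v u]
  have hbend : ∀ u v, (φ u).1 < (φ v).1 → bend u v = c u v := fun u v hlt => if_pos hlt
  refine ⟨φ, bend, hbij, hsymm, fun u v x y huv hxy hne => ?_⟩
  wlog hu : (φ u).1 < (φ v).1 generalizing u v
  · rw [hsymm u v huv, Set.pair_comm u v]
    exact this v u huv.symm (by rwa [Set.pair_comm]) ((hcmp u v huv).resolve_left hu)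
  wlog hx : (φ x).1 < (φ y).1 generalizing x y
  · rw [hsymm x y hxy, Set.pair_comm x y]
    exact this y x hxy.symm (by rwa [Set.pair_comm y x]) ((hcmp x y hxy).resolve_left hx)
  rw [hbend u v hu, hbend x y hx]
  exact h'.Lpath_inter_subset hφ huv hxy hne hu hx
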